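/- arXiv:2412.17868 — 2 statements merged into one kernel-verified Lean document; each statement's English description precedes it below -/
import Mathlib

section
/- For any finite coloring of the natural numbers, there exist natural numbers a and b such that the set {a, b, b·(a+1)} is monochromatic. (This disproves Sahasrabudhe's conjecture that some finite coloring avoids this configuration.) -/
/-!
Call a set of positive integers *thin* if it is not piecewise syndetic in the multiplicative
semigroup, and call a colour *fat* if its class is not thin. Two facts are played against each
other, both about chains `s₀ ∣ s₁ ∣ ⋯` together with the "edge labels" `a = s' / s - 1` of pairs
`s < s'` in the chain.

* `exists_solution_of_long_chain`: a long enough chain all of whose edge labels have fat colours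
  yields a solution. If `C` is a fat class, then for some `z` and some finite set `G` every `z * s`
  is carried into `C` by a factor from `G`. On a large subchain this factor is a constant `g`. If
  one of the labels `a` of the subchain is in `C`, then `b = z * s * g` and
  `b * (a + 1) = z * s' * g` finish; otherwise the subchain avoids one more colour.

* `exists_chain`: there are arbitrarily long chains with fat edge labels. The chain is
  `1 + B₀, …, 1 + Bₘ` with `B₀ = 0`, and for the induction one needs `1 + r * B₀, …, 1 + r * Bₘ`
  to have fat labels `r * (Bⱼ - Bᵢ) / (1 + r * Bᵢ)` for all `r` in a prescribed finite set `Q` of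
  positive rationals. To lengthen the sequence, apply the induction hypothesis to the rationals
  `r * f / (1 + r * f)`, with `r ∈ Q` and `f` in a finite set `F`, to obtain `H`, and put
  `Bᵢ₊₁ = f * (1 + Hᵢ)`. The labels not involving `B₀ = 0` are precisely those of `H` for
  `r * f / (1 + r * f)`, while the labels `r * f * (1 + Hᵢ)` are fat for a suitable `f ∈ F`: a
  finite `F` fixed in advance contains, for every prescribed number of multipliers `x`, an `f`
  with all `x * f` outside of the thin classes (`exists_common_escape`). In the formal argument
  `f` comes with a further factor `N` that clears the denominators of the `r ∈ Q`.
-/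

/-- `Thin A` says that `A` is not multiplicatively piecewise syndetic in the positive integers:
for no finite `G` is the union of the sets `{n | n * g ∈ A}`, `g ∈ G`, multiplicatively thick. -/
def Thin (A : Set ℕ) : Prop :=
  ∀ G : Finset ℕ, (∀ g ∈ G, 0 < g) →
    ∃ W : Finset ℕ, (∀ w ∈ W, 0 < w) ∧ ∀ z : ℕ, 0 < z → ∃ w ∈ W, ∀ g ∈ G, z * w * g ∉ A

/-- Finitely many thin sets can be avoided simultaneously. The set `F` does not depend on the
multipliers `x i`; the extra factors `g ∈ G` carry the induction on `s`. -/
lemma exists_common_escape {ι : Type*} (A : ι → Set ℕ) (s : Finset ι) (hA : ∀ i ∈ s, Thin (A i)) :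
    ∀ G : Finset ℕ, (∀ g ∈ G, 0 < g) →
      ∃ F : Finset ℕ, (∀ f ∈ F, 0 < f) ∧
        ∀ x : ι → ℕ, (∀ i ∈ s, 0 < x i) → ∃ f ∈ F, ∀ i ∈ s, ∀ g ∈ G, x i * f * g ∉ A i := by
  classical
  induction s using Finset.induction_on with
  | empty => exact fun G _ => ⟨{1}, by simp, fun x _ => ⟨1, by simp⟩⟩
  | insert i s his ih =>
    intro G hG
    obtain ⟨W, hW, hWz⟩ := hA i (Finset.mem_insert_self _ _) G hG
    obtain ⟨F, hF, hFx⟩ := ih (fun j hj => hA j (Finset.mem_insert_of_mem hj))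
      ((W ×ˢ G).image fun p => p.1 * p.2) (by
        intro g hg
        obtain ⟨⟨w, g⟩, hp, rfl⟩ := Finset.mem_image.1 hg
        rw [Finset.mem_product] at hp
        exact Nat.mul_pos (hW _ hp.1) (hG _ hp.2))
    refine ⟨(F ×ˢ W).image fun p => p.1 * p.2, ?_, fun x hx => ?_⟩
    · intro f hf
      obtain ⟨⟨f, w⟩, hp, rfl⟩ := Finset.mem_image.1 hf
      rw [Finset.mem_product] at hp
      exact Nat.mul_pos (hF _ hp.1) (hW _ hp.2)
    · obtain ⟨f, hf, hfs⟩ := hFx x (fun j hj => hx j (Finset.mem_insert_of_mem hj))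
      obtain ⟨w, hw, hwG⟩ := hWz (x i * f)
        (Nat.mul_pos (hx i (Finset.mem_insert_self _ _)) (hF f hf))
      refine ⟨f * w, Finset.mem_image.2 ⟨(f, w), Finset.mem_product.2 ⟨hf, hw⟩, rfl⟩, ?_⟩
      intro j hj g hg
      rcases Finset.mem_insert.1 hj with rfl | hj
      · simpa [mul_assoc] using hwG g hg
      · have := hfs j hj (w * g)
          (Finset.mem_image.2 ⟨(w, g), Finset.mem_product.2 ⟨hw, hg⟩, rfl⟩)
        simpa [mul_assoc] using this

lemma exists_common_denominator (Q : Finset ℚ) (hQ : ∀ q ∈ Q, 0 < q) :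
    ∃ N : ℕ, 0 < N ∧ ∀ q ∈ Q, ∃ k : ℕ, 0 < k ∧ (k : ℚ) = q * N := by
  classical
  refine ⟨∏ q ∈ Q, q.den, Finset.prod_pos fun q _ => q.pos, fun q hq => ?_⟩
  have hnum : 0 < q.num := Rat.num_pos.2 (hQ q hq)
  refine ⟨q.num.toNat * ∏ p ∈ Q.erase q, p.den,
    Nat.mul_pos (by omega) (Finset.prod_pos fun q _ => q.pos), ?_⟩
  rw [← Finset.mul_prod_erase Q _ hq]
  have h1 : ((q.num.toNat : ℕ) : ℚ) = (q.num : ℚ) := by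
    exact_mod_cast Int.toNat_of_nonneg hnum.le
  have h2 : (q.num : ℚ) = q * q.den := (Rat.mul_den_eq_num q).symm
  push_cast
  rw [h1, h2]
  ring

/-- The positive integers whose colour class is not thin, as a set of rationals: membership of a
quotient includes that it is a positive integer. -/
def Fat {r : ℕ} (c : ℕ → Fin r) : Set ℚ :=
  {q | ∃ n : ℕ, 0 < n ∧ (n : ℚ) = q ∧ ¬ Thin {k | c k = c n}}

/-- For every `q ∈ Q`, the numbers `1 + q * B i`, `i ≤ m`, form a chain whose edge labels are
integers of fat colour. -/
lemma exists_chain {r : ℕ} (c : ℕ → Fin r) (m : ℕ) :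
    ∀ Q : Finset ℚ, (∀ q ∈ Q, 0 < q) →
      ∃ B : ℕ → ℕ, B 0 = 0 ∧ ∀ q ∈ Q, ∀ i j, i < j → j ≤ m →
        q * ((B j : ℚ) - B i) / (1 + q * B i) ∈ Fat c := by
  classical
  induction m with
  | zero => exact fun Q _ => ⟨fun _ => 0, rfl, fun q _ i j hij hj => by omega⟩
  | succ m ih =>
    intro Q hQ
    obtain ⟨N, hN, hNQ⟩ := exists_common_denominator Q hQ
    choose! k hk hkq using hNQ
    -- The integers `k q * (1 + H i)`, for `q ∈ Q` and `i ≤ m`, will be the multipliers.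
    obtain ⟨F, hF, hFx⟩ := exists_common_escape
      (fun p : (ℚ × ℕ) × Fin r => {n | c n = p.2})
      ((Q ×ˢ Finset.range (m + 1)) ×ˢ Finset.univ.filter fun t => Thin {n | c n = t})
      (by
        intro p hp
        exact (Finset.mem_filter.1 (Finset.mem_product.1 hp).2).2)
      {1} (by simp)
    obtain ⟨H, hH0, hH⟩ := ih
      ((Q ×ˢ F).image fun p => p.1 * (N * p.2 : ℕ) / (1 + p.1 * (N * p.2 : ℕ))) (by
        intro q hq
        obtain ⟨⟨q, f⟩, hp, rfl⟩ := Finset.mem_image.1 hq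
        rw [Finset.mem_product] at hp
        have h1 : 0 < q := hQ q hp.1
        have h2 : 0 < N * f := Nat.mul_pos hN (hF f hp.2)
        have h3 : (0 : ℚ) < (N * f : ℕ) := by exact_mod_cast h2
        dsimp only
        positivity)
    obtain ⟨f, hf, hfx⟩ := hFx (fun p => k p.1.1 * (1 + H p.1.2)) (by
      intro p hp
      exact Nat.mul_pos (hk _ (Finset.mem_product.1 (Finset.mem_product.1 hp).1).1) (by omega))
    have hfpos := hF f hf
    refine ⟨fun i => Nat.casesOn i 0 fun i => N * f * (1 + H i), rfl, ?_⟩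
    intro q hq i j hij hj
    have hq0 : 0 < q := hQ q hq
    obtain ⟨j, rfl⟩ : ∃ j', j = j' + 1 := ⟨j - 1, by omega⟩
    rcases i with _ | i
    · refine ⟨k q * (1 + H j) * f,
        Nat.mul_pos (Nat.mul_pos (hk q hq) (by omega)) hfpos, ?_, fun hthin => ?_⟩
      · push_cast
        rw [hkq q hq]
        simp
        ring
      · refine hfx ((q, j), c (k q * (1 + H j) * f)) ?_ 1 (by simp) (by simp)
        simp only [Finset.mem_product, Finset.mem_filter, Finset.mem_univ, true_and,
          Finset.mem_range]
        exact ⟨⟨hq, by omega⟩, hthin⟩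
    · have key := hH (q * (N * f : ℕ) / (1 + q * (N * f : ℕ)))
        (Finset.mem_image.2 ⟨(q, f), Finset.mem_product.2 ⟨hq, hf⟩, rfl⟩) i j (by omega)
        (by omega)
      convert key using 1
      have h3 : (0 : ℚ) < (N * f : ℕ) := by exact_mod_cast Nat.mul_pos hN hfpos
      simp only [Nat.cast_mul, Nat.cast_add, Nat.cast_one] at h3 ⊢
      have h4 : (0 : ℚ) ≤ H i := Nat.cast_nonneg _
      generalize (N : ℚ) * (f : ℚ) = y at h3 ⊢
      have h5 : 1 + q * y ≠ 0 := by positivity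
      have h6 : 1 + q * (y * (1 + (H i : ℚ))) ≠ 0 := by positivity
      have h7 : 1 + q * y / (1 + q * y) * (H i : ℚ) ≠ 0 := by positivity
      rw [div_eq_div_iff h6 h7]
      field_simp
      ring

/-- A long chain with edge labels of fat colours only contains a solution; by induction on the
set `K` of colours allowed on the edges. -/
lemma exists_solution_of_long_chain {r : ℕ} (c : ℕ → Fin r) (K : Finset (Fin r))
    (hK : ∀ t ∈ K, ¬ Thin {n | c n = t}) :
    ∃ M : ℕ, ∀ T : Finset ℕ, M ≤ T.card → (∀ s ∈ T, 0 < s) →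
      (∀ s ∈ T, ∀ s' ∈ T, s < s' → ∃ a, 0 < a ∧ s' = s * (a + 1) ∧ c a ∈ K) →
      ∃ a b : ℕ, 0 < a ∧ 0 < b ∧ c b = c a ∧ c (b * (a + 1)) = c a := by
  classical
  induction K using Finset.induction_on with
  | empty =>
    refine ⟨2, fun T hT _ hedge => ?_⟩
    obtain ⟨s, hs, s', hs', hne⟩ := Finset.one_lt_card.1 hT
    rcases lt_or_gt_of_ne hne with h | h
    · obtain ⟨a, _, _, ha⟩ := hedge s hs s' hs' h
      simp at ha
    · obtain ⟨a, _, _, ha⟩ := hedge s' hs' s hs h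
      simp at ha
  | insert t K _ ih =>
    obtain ⟨M, hM⟩ := ih fun u hu => hK u (Finset.mem_insert_of_mem hu)
    have ht := hK t (Finset.mem_insert_self _ _)
    unfold Thin at ht
    push Not at ht
    obtain ⟨G, hG, hGW⟩ := ht
    refine ⟨G.card * M + 1, fun T hT hpos hedge => ?_⟩
    obtain ⟨z, hz, hzT⟩ := hGW T hpos
    choose! g hgG hgc using hzT
    obtain ⟨s₀, hs₀⟩ : T.Nonempty := Finset.card_pos.1 (by omega)
    obtain ⟨y, hy, hyM⟩ := Finset.exists_le_card_fiber_of_mul_le_card_of_maps_to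
      (f := g) (n := M) hgG ⟨_, hgG s₀ hs₀⟩ (by omega)
    by_cases hcol : ∃ s ∈ T, ∃ a, 0 < a ∧ s * (a + 1) ∈ T ∧ c a = t ∧ g s = y ∧
        g (s * (a + 1)) = y
    · obtain ⟨s, hs, a, ha, hs', hat, hgs, hgs'⟩ := hcol
      have h1 : c (z * s * g s) = t := hgc s hs
      have h2 : c (z * (s * (a + 1)) * g (s * (a + 1))) = t := hgc _ hs'
      refine ⟨a, z * s * y, ha, Nat.mul_pos (Nat.mul_pos hz (hpos s hs)) (hG y hy), ?_, ?_⟩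
      · rw [hat, ← hgs, h1]
      · rw [hat, ← h2, hgs']
        congr 1
        ring
    · refine hM (T.filter fun s => g s = y) hyM
        (fun s hs => hpos s (Finset.mem_filter.1 hs).1) ?_
      intro s hs s' hs' hlt
      rw [Finset.mem_filter] at hs hs'
      obtain ⟨a, ha, rfl, hc⟩ := hedge s hs.1 s' hs'.1 hlt
      refine ⟨a, ha, rfl, (Finset.mem_insert.1 hc).resolve_left fun hat => ?_⟩
      exact hcol ⟨s, hs.1, a, ha, hs'.1, hat, hs.2, hs'.2⟩

/-- Disproof of Sahasrabudhe's conjecture: every finite coloring of ℕ contains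
a monochromatic {a, b, b·(a+1)} with a, b positive. -/
theorem monochromatic_a_b_ba1 (r : ℕ) (c : ℕ → Fin r) :
    ∃ a b : ℕ, 0 < a ∧ 0 < b ∧ c b = c a ∧ c (b * (a + 1)) = c a := by
  classical
  obtain ⟨M, hM⟩ := exists_solution_of_long_chain c
    (Finset.univ.filter fun t => ¬ Thin {n | c n = t}) (by simp)
  obtain ⟨B, -, hB⟩ := exists_chain c M {1} (by simp)
  have hedge : ∀ i j, i < j → j ≤ M →
      ∃ a, 0 < a ∧ 1 + B j = (1 + B i) * (a + 1) ∧ ¬ Thin {k | c k = c a} := by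
    intro i j hij hj
    obtain ⟨a, ha, hae, hat⟩ := hB 1 (by simp) i j hij hj
    refine ⟨a, ha, ?_, hat⟩
    have h1 : (0 : ℚ) ≤ B i := Nat.cast_nonneg _
    have h2 : 1 + 1 * (B i : ℚ) ≠ 0 := by positivity
    rw [eq_div_iff h2] at hae
    have h3 : ((1 + B j : ℕ) : ℚ) = ((1 + B i) * (a + 1) : ℕ) := by
      push_cast
      linarith
    exact_mod_cast h3
  have hmono : ∀ i j, i < j → j ≤ M → 1 + B i < 1 + B j := by
    intro i j hij hj
    obtain ⟨a, ha, hae, -⟩ := hedge i j hij hj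
    rw [hae]
    nlinarith
  refine hM ((Finset.range (M + 1)).image fun i => 1 + B i) ?_ ?_ ?_
  · rw [Finset.card_image_of_injOn, Finset.card_range]
    · omega
    · intro i hi j hj hij
      simp only [Finset.coe_range, Set.mem_Iio] at hi hj
      dsimp only at hij
      by_contra hne
      rcases lt_or_gt_of_ne hne with h | h
      · have := hmono i j h (by omega)
        omega
      · have := hmono j i h (by omega)
        omega
  · intro s hs
    obtain ⟨i, -, rfl⟩ := Finset.mem_image.1 hs
    omega
  · intro s hs s' hs' hlt
    obtain ⟨i, hi, rfl⟩ := Finset.mem_image.1 hs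
    obtain ⟨j, hj, rfl⟩ := Finset.mem_image.1 hs'
    rw [Finset.mem_range] at hi hj
    have hij : i < j := by
      by_contra hle
      rcases Nat.lt_or_eq_of_le (not_lt.1 hle) with h | h
      · have := hmono j i h (by omega)
        omega
      · subst h
        omega
    obtain ⟨a, ha, hae, hat⟩ := hedge i j hij (by omega)
    exact ⟨a, ha, hae, by simpa using hat⟩
end

section
/- For any finite coloring of ℕ, there exist a ∈ ℕ and b ∈ ℕ such that a, a·b, and (a+1)·b all have the same color. -/
/-!
Call a set of positive integers *IP* if it contains all finite sums of some infinite sequence.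
By Hindman's theorem, if an IP set is finitely colored then some color class in it is again IP.
The key step (`IsIP.exists_dilate`) is that every IP set `B` has some `u > 0` for which
`{n | u * n ∈ B ∧ u * (n + 1) ∈ B}` is again IP: take `u` to be the first term of the sequence,
pass to a subsequence of sums divisible by `u`, and divide by `u`.

Iterating, alternately restrict to a color class `t` and apply this step. The conditions
"`v * n` and `v * (n + 1)` have color `t` for all `n ∈ B`" survive each step (with `v` replaced by
`v * u`), so the set of colors `t` for which such a `v` exists keeps growing. There are finitely
many colors, so at some stage the color of some `n ∈ B` is already in this set, and then
`a = n`, `b = v` work.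
-/

/-- A set of positive integers is IP if it contains all finite sums of distinct-index terms of some
infinite sequence. -/
def IsIP (B : Set ℕ+) : Prop := ∃ a : Stream' ℕ+, Hindman.FS a ⊆ B

lemma IsIP.exists_color {B : Set ℕ+} (hB : IsIP B) {κ : Type*} [Finite κ] (f : ℕ+ → κ) :
    ∃ k, IsIP {m | m ∈ B ∧ f m = k} := by
  obtain ⟨a, ha⟩ := hB
  obtain ⟨_, ⟨k, rfl⟩, b, hb⟩ := Hindman.FS_partition_regular a
    (Set.range fun k => {m | m ∈ B ∧ f m = k}) (Set.finite_range _)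
    (fun m hm => ⟨_, ⟨f m, rfl⟩, ha hm, rfl⟩)
  exact ⟨k, b, hb⟩

lemma FS_map_mul (u : ℕ+) {d : Stream' ℕ+} {m : ℕ+} (hm : m ∈ Hindman.FS d) :
    u * m ∈ Hindman.FS (d.map (u * ·)) := by
  induction hm with
  | head' a => exact Hindman.FS.head (a.map (u * ·))
  | tail' a m _ ih => exact Hindman.FS.tail (a.map (u * ·)) _ ih
  | cons' a m _ ih =>
    rw [mul_add]
    exact Hindman.FS.cons (a.map (u * ·)) _ ih

/-- An IP set contains an IP set of multiples of any `u`, and dividing it by `u` leaves an IP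
set. -/
lemma IsIP.div {B : Set ℕ+} (hB : IsIP B) (u : ℕ+) : IsIP {m | u * m ∈ B} := by
  haveI : NeZero (u : ℕ) := ⟨u.ne_zero⟩
  obtain ⟨k, b, hb⟩ := hB.exists_color (fun m => ((m : ℕ) : ZMod u))
  -- `b₀`, `b₁` and `b₀ + b₁` all have residue `k` modulo `u`, which forces `k = 0`
  have hk : k = 0 := by
    have h0 := (hb (Hindman.FS.singleton b 0)).2
    have h1 := (hb (Hindman.FS.singleton b 1)).2
    have h2 := (hb (Hindman.FS.add_two b 0 1 one_pos)).2
    simp only [PNat.add_coe, Nat.cast_add] at h0 h1 h2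
    rw [h0, h1] at h2
    simpa using h2
  have hdvd : ∀ n, ∃ d, b.get n = u * d := fun n => by
    have h := (hb (Hindman.FS.singleton b n)).2
    rw [hk] at h
    exact PNat.dvd_iff.2 ((ZMod.natCast_eq_zero_iff _ _).1 h)
  choose d hd using hdvd
  have hbd : b = Stream'.map (u * ·) d := Stream'.ext hd
  refine ⟨d, fun m hm => (hb ?_).1⟩
  rw [hbd]
  exact FS_map_mul u hm

lemma IsIP.exists_dilate {B : Set ℕ+} (hB : IsIP B) :
    ∃ u : ℕ+, IsIP {n | u * n ∈ B ∧ u * (n + 1) ∈ B} := by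
  obtain ⟨a, ha⟩ := hB
  have h : IsIP {m | m ∈ B ∧ a.head + m ∈ B} :=
    ⟨a.tail, fun m hm => ⟨ha (Hindman.FS.tail a m hm), ha (Hindman.FS.cons a m hm)⟩⟩
  refine ⟨a.head, ?_⟩
  simpa only [Set.mem_setOf_eq, mul_add, mul_one, add_comm] using h.div a.head

lemma IsIP.nonempty {B : Set ℕ+} (hB : IsIP B) : B.Nonempty :=
  let ⟨a, ha⟩ := hB
  ⟨a.head, ha (Hindman.FS.head a)⟩

/-- If no color class contains a triple `n, v * n, v * (n + 1)`, then for every `k` there are an IP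
set `B` and `k` colors `t`, each of which is constantly the color of `v * n` and `v * (n + 1)`, as
`n` ranges over `B`, for some `v` depending only on `t`. -/
lemma exists_IsIP_of_no_triple {κ : Type*} [Finite κ] (f : ℕ+ → κ)
    (hf : ∀ n v : ℕ+, f (v * n) = f n → f (v * (n + 1)) ≠ f n) (k : ℕ) :
    ∃ (S : Finset κ) (B : Set ℕ+), S.card = k ∧ IsIP B ∧
      ∀ t ∈ S, ∃ v : ℕ+, ∀ n ∈ B, f (v * n) = t ∧ f (v * (n + 1)) = t := by
  classical
  induction k with
  | zero => exact ⟨∅, Set.univ, rfl, ⟨Stream'.const 1, Set.subset_univ _⟩, by simp⟩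
  | succ k ih =>
    obtain ⟨S, B, hS, hB, hSB⟩ := ih
    obtain ⟨t, ht⟩ := hB.exists_color f
    have htS : t ∉ S := fun h => by
      obtain ⟨v, hv⟩ := hSB t h
      obtain ⟨n, hnB, hn⟩ := ht.nonempty
      exact hf n v ((hv n hnB).1.trans hn.symm) ((hv n hnB).2.trans hn.symm)
    obtain ⟨u, hu⟩ := ht.exists_dilate
    refine ⟨insert t S, _, by rw [Finset.card_insert_of_notMem htS, hS], hu, ?_⟩
    intro s hs
    rcases Finset.mem_insert.1 hs with rfl | hs
    · exact ⟨u, fun n hn => ⟨hn.1.2, hn.2.2⟩⟩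
    · obtain ⟨v, hv⟩ := hSB s hs
      refine ⟨v * u, fun n hn => ?_⟩
      rw [mul_assoc, mul_assoc]
      exact ⟨(hv _ hn.1.1).1, (hv _ hn.2.1).1⟩

/-- Moreira-type statement: for any finite coloring of ℕ there are positive a, b
with a, a·b, (a+1)·b the same color. -/
theorem monochromatic_a_ab_a1b (r : ℕ) (c : ℕ → Fin r) :
    ∃ a b : ℕ, 0 < a ∧ 0 < b ∧ c (a * b) = c a ∧ c ((a + 1) * b) = c a := by
  by_contra! H
  obtain ⟨S, -, hS, -⟩ := exists_IsIP_of_no_triple (fun n : ℕ+ => c n)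
    (fun n v h => by
      have := H n v n.pos v.pos
      simp only [PNat.mul_coe, PNat.add_coe, PNat.one_coe, mul_comm (v : ℕ)] at h ⊢
      exact this h) (r + 1)
  have := S.card_le_univ
  simp only [Fintype.card_fin] at this
  omega
end
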